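/- (Proposition 2) Fix vehicle length l > 0, uncertainty parameter σₒ > 0, positive constants T, L, τ, and a capacity requirement ŝ > 0. Let 0 < v₁ < v₂ and suppose η₁ and η₂ are the greatest elements of the feasible sets {η > 0 : s(v₁,η) ≥ ŝ} and {η > 0 : s(v₂,η) ≥ ŝ}, respectively, with the constraint binding at both, i.e. s(v₁,η₁) = s(v₂,η₂) = ŝ. Then η₁ < η₂ and the minimized collision probability strictly decreases with speed: p(v₂,η₂) < p(v₁,η₁). -/

import Mathlib

open MeasureTheory Real Filter Set

/-- The standard Gaussian probability density function. -/
noncomputable def stdGaussianPDF (x : ℝ) : ℝ :=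
  (Real.sqrt (2 * Real.pi))⁻¹ * Real.exp (-x ^ 2 / 2)

/-- The standard Gaussian cumulative distribution function Φ. -/
noncomputable def stdGaussianCDF (x : ℝ) : ℝ :=
  ∫ t in Set.Iic x, stdGaussianPDF t

/-- The per-time-step collision probability p(v,η) = Φ((l − v·η)/(v·σₒ·√η)). -/
noncomputable def collisionProb (l σₒ v η : ℝ) : ℝ :=
  stdGaussianCDF ((l - v * η) / (v * σₒ * Real.sqrt η))

/-- The collision-inclusive capacity s(v,η) = 1/(η + (T·L)/(τ·v)·p(v,η)). -/
noncomputable def cic (l σₒ T L τ v η : ℝ) : ℝ :=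
  1 / (η + (T * L) / (τ * v) * collisionProb l σₒ v η)


theorem stdGaussianPDF_pos' (x : ℝ) : 0 < stdGaussianPDF x := by
  unfold stdGaussianPDF; positivity

theorem stdGaussianPDF_cont' : Continuous stdGaussianPDF := by
  unfold stdGaussianPDF; fun_prop

theorem stdGaussianPDF_int' : Integrable stdGaussianPDF := by
  have h := (integrable_exp_neg_mul_sq (b := 1/2) (by norm_num)).const_mul
    (Real.sqrt (2 * Real.pi))⁻¹
  refine h.congr (Filter.Eventually.of_forall fun x => ?_)
  simp only [stdGaussianPDF]
  congr 2
  ring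

theorem stdGaussianCDF_nonneg' (x : ℝ) : 0 ≤ stdGaussianCDF x :=
  integral_nonneg fun t => (stdGaussianPDF_pos' t).le

theorem stdGaussianCDF_lt' {a b : ℝ} (h : a < b) : stdGaussianCDF a < stdGaussianCDF b := by
  have h1 := intervalIntegral.integral_Iic_sub_Iic (a := a) (b := b)
    (stdGaussianPDF_int'.integrableOn) (stdGaussianPDF_int'.integrableOn)
  have h2 := intervalIntegral.intervalIntegral_pos_of_pos
    (stdGaussianPDF_cont'.intervalIntegrable a b) stdGaussianPDF_pos' h
  unfold stdGaussianCDF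
  linarith

theorem collisionProb_lt' {l σ v w η θ : ℝ} (hl : 0 < l) (hσ : 0 < σ) (hv : 0 < v)
    (hvw : v < w) (hη : 0 < η) (h : η ≤ θ) :
    collisionProb l σ w θ < collisionProb l σ v η := by
  have key : ∀ u x : ℝ, 0 < u → 0 < x →
      (l - u * x) / (u * σ * √x) = l / (u * σ * √x) - √x / σ := by
    intro u x hu hx
    have hs := Real.sqrt_pos.2 hx
    have h2 := Real.sq_sqrt hx.le
    field_simp
    rw [h2]
  have hw := hv.trans hvw
  have hs := Real.sqrt_pos.2 hη
  have hst := Real.sqrt_le_sqrt h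
  unfold collisionProb
  apply stdGaussianCDF_lt'
  rw [key w θ hw (hη.trans_le h), key v η hv hη]
  have h1 : √η / σ ≤ √θ / σ := by gcongr
  have h2 : l / (w * σ * √θ) < l / (v * σ * √η) := by
    apply div_lt_div_of_pos_left hl (by positivity)
    calc v * σ * √η < w * σ * √η := by gcongr
      _ ≤ w * σ * √θ := by gcongr
  linarith

/-- Proposition 2: if 0 < v₁ < v₂ and η₁, η₂ are the greatest
elements of the feasible sets {η > 0 : s(vᵢ,η) ≥ ŝ}, with the capacity
constraint binding at both, then η₁ < η₂ and p(v₂,η₂) < p(v₁,η₁). -/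
theorem minimized_collisionProb_decreases_with_speed (l σₒ T L τ shat v₁ v₂ η₁ η₂ : ℝ)
    (hl : 0 < l) (hσ : 0 < σₒ) (hT : 0 < T) (hL : 0 < L) (hτ : 0 < τ)
    (hshat : 0 < shat) (hv₁ : 0 < v₁) (hv : v₁ < v₂)
    (hη₁ : 0 < η₁) (hη₂ : 0 < η₂)
    (hmax₁ : ∀ η, 0 < η → shat ≤ cic l σₒ T L τ v₁ η → η ≤ η₁)
    (hmax₂ : ∀ η, 0 < η → shat ≤ cic l σₒ T L τ v₂ η → η ≤ η₂)
    (hbind₁ : cic l σₒ T L τ v₁ η₁ = shat)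
    (hbind₂ : cic l σₒ T L τ v₂ η₂ = shat) :
    η₁ < η₂ ∧ collisionProb l σₒ v₂ η₂ < collisionProb l σₒ v₁ η₁ := by
  have hp := collisionProb_lt' hl hσ hv₁ hv hη₁ le_rfl
  have hv₂ := hv₁.trans hv
  have hn : 0 ≤ collisionProb l σₒ v₂ η₁ := stdGaussianCDF_nonneg' _
  have hlt : shat < cic l σₒ T L τ v₂ η₁ := by
    rw [← hbind₁]
    unfold cic
    apply one_div_lt_one_div_of_lt (by positivity)
    have h1 : T * L / (τ * v₂) * collisionProb l σₒ v₂ η₁ ≤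
        T * L / (τ * v₁) * collisionProb l σₒ v₂ η₁ := by gcongr
    have h2 : T * L / (τ * v₁) * collisionProb l σₒ v₂ η₁ <
        T * L / (τ * v₁) * collisionProb l σₒ v₁ η₁ := by gcongr
    linarith
  have hle := hmax₂ η₁ hη₁ hlt.le
  refine ⟨lt_of_le_of_ne hle ?_, collisionProb_lt' hl hσ hv₁ hv hη₁ hle⟩
  rintro rfl
  exact hlt.ne hbind₂.symm
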